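/- For every integer n ≥ 1, N̄(0,4,n) − N̄(2,4,n) equals 2 if n is a perfect square, and equals 0 if n is not a perfect square. -/

import Mathlib

/-- An overpartition of `n`: a partition of `n` together with a chosen subset of its
distinct part sizes (the overlined parts). -/
def Overpartition (n : ℕ) : Type :=
  {P : n.Partition × Finset ℕ // P.2 ⊆ P.1.parts.toFinset}

/-- The Dyson rank of an overpartition: largest part minus number of parts. -/
def Overpartition.rank {n : ℕ} (P : Overpartition n) : ℤ :=
  (P.1.1.parts.sup : ℤ) - (P.1.1.parts.card : ℤ)

/-- `nbarRank m n` is the number of overpartitions of `n` with rank `m`. -/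
noncomputable def nbarRank (m : ℤ) (n : ℕ) : ℕ :=
  Nat.card {P : Overpartition n // P.rank = m}

/-- `nbar a c n` is the number of overpartitions of `n` with rank congruent to `a` mod `c`. -/
noncomputable def nbar (a : ℤ) (c : ℕ) (n : ℕ) : ℕ :=
  Nat.card {P : Overpartition n // P.rank ≡ a [ZMOD (c : ℤ)]}

/-- `pbar n` is the number of overpartitions of `n`. -/
noncomputable def pbar (n : ℕ) : ℕ := Nat.card (Overpartition n)

open PowerSeries in
/-- The inverse of `1 - I X^k`. -/
noncomputable def ovV (k : ℕ) : ℂ⟦X⟧ := (1 - C Complex.I * X ^ k)⁻¹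

open PowerSeries in
/-- The inverse of `1 + I X^k`. -/
noncomputable def ovW (k : ℕ) : ℂ⟦X⟧ := (1 + C Complex.I * X ^ k)⁻¹

open PowerSeries in
theorem ovV_mul (k : ℕ) : (1 - C Complex.I * X ^ (k + 1)) * ovV (k + 1) = 1 := by
  unfold ovV
  apply PowerSeries.mul_inv_cancel
  simp

open PowerSeries in
theorem ovW_mul (k : ℕ) : (1 + C Complex.I * X ^ (k + 1)) * ovW (k + 1) = 1 := by
  unfold ovW
  apply PowerSeries.mul_inv_cancel
  simp

open PowerSeries in
theorem ovI_sq : (C Complex.I : ℂ⟦X⟧) * C Complex.I = -1 := by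
  rw [← map_mul, Complex.I_mul_I, map_neg, map_one]

open PowerSeries in
/-- The basic term `(-w)^n (-w;q)_n / (w;q)_n`, with `w = I q^(D+1)`. -/
noncomputable def ovE (D n : ℕ) : ℂ⟦X⟧ :=
  (-(C Complex.I * X ^ (D + 1))) ^ n *
    ∏ j ∈ Finset.range n, ((1 + C Complex.I * X ^ (D + j + 1)) * ovV (D + j + 1))

open PowerSeries in
theorem ovE_succ (D n : ℕ) : ovE D (n + 1) =
    ovE D n * (-(C Complex.I * X ^ (D + 1))) *
      ((1 + C Complex.I * X ^ (D + n + 1)) * ovV (D + n + 1)) := by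
  unfold ovE
  rw [Finset.prod_range_succ, pow_succ]
  ring

open PowerSeries in
theorem ovE_shift (D n : ℕ) :
    ovE (D + 1) n * ((1 + C Complex.I * X ^ (D + 1)) * ovV (D + 1)) =
    X ^ n * ovE D n * ((1 + C Complex.I * X ^ (D + n + 1)) * ovV (D + n + 1)) := by
  have h := Finset.prod_range_succ
    (fun j => (1 + C Complex.I * X ^ (D + j + 1)) * ovV (D + j + 1)) n
  rw [Finset.prod_range_succ'] at h
  unfold ovE
  have e : ∀ j, D + 1 + j + 1 = D + (j + 1) + 1 := fun j => by ring
  simp only [e]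
  have e2 : (-(C Complex.I * X ^ (D + 1 + 1)) : ℂ⟦X⟧) ^ n =
      X ^ n * (-(C Complex.I * X ^ (D + 1))) ^ n := by
    rw [← mul_pow]; congr 1; ring
  rw [e2]
  simp only [add_zero] at h
  linear_combination (X ^ n * (-(C Complex.I * X ^ (D + 1))) ^ n) * h

open PowerSeries in
/-- The summand of `L(w)`. -/
noncomputable def ovL (D n : ℕ) : ℂ⟦X⟧ := ovE D n * ovV (D + n + 1)

open PowerSeries in
/-- The telescoping certificate. -/
noncomputable def ovC (D n : ℕ) : ℂ⟦X⟧ :=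
  ovE D n * (1 + X ^ (2 * D + 2 + n)) * ovW (D + 1) * ovV (D + n + 1)

open PowerSeries in
theorem ov_step (D n : ℕ) :
    ovL D n - X ^ (2 * D + 3) * ovL (D + 1) n = ovC D n - ovC D (n + 1) := by
  have hS := ovE_shift D n
  have hV0 := ovV_mul D
  have hW0 := ovW_mul D
  have hV1 := ovV_mul (D + n)
  have hV2 := ovV_mul (D + n + 1)
  have hI := ovI_sq
  unfold ovL ovC
  rw [ovE_succ]
  have e1 : D + 1 + n + 1 = D + n + 1 + 1 := by ring
  have e2 : D + (n + 1) + 1 = D + n + 1 + 1 := by ring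
  rw [e1, e2]
  have hE : ovE (D + 1) n = X ^ n * ovE D n * (1 + C Complex.I * X ^ (D + n + 1)) *
      ovV (D + n + 1) * (1 - C Complex.I * X ^ (D + 1)) * ovW (D + 1) := by
    linear_combination (1 - C Complex.I * X ^ (D + 1)) * ovW (D + 1) * hS
      - ovE (D + 1) n * (1 + C Complex.I * X ^ (D + 1)) * ovW (D + 1) * hV0
      - ovE (D + 1) n * hW0
  rw [hE]
  generalize ovE D n = E at *
  generalize ovV (D + n + 1 + 1) = V2 at *
  generalize ovV (D + n + 1) = V1 at *
  generalize ovW (D + 1) = W at *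
  generalize (C Complex.I : ℂ⟦X⟧) = a at *
  have x1 : (X : ℂ⟦X⟧) ^ (D + n + 1) = X ^ D * X ^ n * X := by ring
  have x2 : (X : ℂ⟦X⟧) ^ (D + n + 1 + 1) = X ^ D * X ^ n * X ^ 2 := by ring
  have x3 : (X : ℂ⟦X⟧) ^ (2 * D + 3) = (X ^ D) ^ 2 * X ^ 3 := by ring
  have x4 : (X : ℂ⟦X⟧) ^ (2 * D + 2 + n) = (X ^ D) ^ 2 * X ^ n * X ^ 2 := by ring
  have x5 : (X : ℂ⟦X⟧) ^ (2 * D + 2 + (n + 1)) = (X ^ D) ^ 2 * X ^ n * X ^ 3 := by ring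
  have x6 : (X : ℂ⟦X⟧) ^ (D + 1) = X ^ D * X := by ring
  simp only [x1, x2, x3, x4, x5, x6] at hV2 hW0 ⊢
  clear x1 x2 x3 x4 x5 x6 e1 e2 hS hE hV0 hV1
  generalize (X : ℂ⟦X⟧) ^ D = d at *
  generalize (X : ℂ⟦X⟧) ^ n = Q at *
  generalize (X : ℂ⟦X⟧) = q at *
  linear_combination (-(E * V1)) * hW0
    - E * V1 * (a * (d * q) - d ^ 2 * Q * q ^ 2) * W * hV2
    - E * V1 * W * V2 * (d ^ 2 * Q * q ^ 2 + d ^ 2 * Q * q ^ 3) * hI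

open PowerSeries in
theorem ovC_zero (D : ℕ) : ovC D 0 = 1 := by
  have hV0 := ovV_mul D
  have hW0 := ovW_mul D
  have hI := ovI_sq
  have x4 : (X : ℂ⟦X⟧) ^ (2 * D + 2 + 0) = X ^ (D + 1) * X ^ (D + 1) := by ring
  unfold ovC ovE
  rw [x4]
  simp only [pow_zero, Finset.range_zero, Finset.prod_empty, add_zero, one_mul]
  generalize (X : ℂ⟦X⟧) ^ (D + 1) = x at *
  linear_combination (1 + C Complex.I * x) * ovW (D + 1) * hV0 + hW0
    + x * x * ovW (D + 1) * ovV (D + 1) * hI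

open PowerSeries in
theorem ovC_dvd (D n : ℕ) : (X : ℂ⟦X⟧) ^ n ∣ ovC D n := by
  unfold ovC ovE
  refine Dvd.dvd.mul_right (Dvd.dvd.mul_right (Dvd.dvd.mul_right (Dvd.dvd.mul_right ?_ _) _) _) _
  apply pow_dvd_pow_of_dvd
  rw [dvd_neg]
  exact Dvd.dvd.mul_left (dvd_pow_self _ (by omega)) _

open PowerSeries in
theorem ov_rec (D N : ℕ) :
    (X : ℂ⟦X⟧) ^ N ∣ (∑ n ∈ Finset.range N, ovL D n) - 1 -
      X ^ (2 * D + 3) * ∑ n ∈ Finset.range N, ovL (D + 1) n := by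
  have h : (∑ n ∈ Finset.range N, ovL D n) -
      X ^ (2 * D + 3) * ∑ n ∈ Finset.range N, ovL (D + 1) n = 1 - ovC D N := by
    rw [Finset.mul_sum, ← Finset.sum_sub_distrib, ← ovC_zero D, ← Finset.sum_range_sub']
    exact Finset.sum_congr rfl fun n _ => ov_step D n
  have h2 : (∑ n ∈ Finset.range N, ovL D n) - 1 -
      X ^ (2 * D + 3) * ∑ n ∈ Finset.range N, ovL (D + 1) n = - ovC D N := by
    linear_combination h
  rw [h2, dvd_neg]
  exact ovC_dvd D N

open PowerSeries in
theorem ov_iter (N K : ℕ) :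
    (X : ℂ⟦X⟧) ^ N ∣ X * (∑ n ∈ Finset.range N, ovL 0 n) -
      (∑ D ∈ Finset.range K, X ^ ((D + 1) ^ 2)) -
      X ^ ((K + 1) ^ 2) * ∑ n ∈ Finset.range N, ovL K n := by
  induction K with
  | zero => simp
  | succ K ih =>
    have h := (ov_rec K N).mul_left (X ^ ((K + 1) ^ 2))
    have := dvd_add ih h
    convert this using 1
    rw [Finset.sum_range_succ]
    have e : (X : ℂ⟦X⟧) ^ ((K + 1 + 1) ^ 2) = X ^ ((K + 1) ^ 2) * X ^ (2 * K + 3) := by ring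
    rw [e]
    ring

open PowerSeries in
/-- Generating function of overpartitions with parts at most `m`, by number of parts. -/
noncomputable def ovA (m : ℕ) : ℂ⟦X⟧ :=
  ∏ j ∈ Finset.range m, ((1 + C Complex.I * X ^ (j + 1)) * ovV (j + 1))

open PowerSeries in
theorem ovA_diff (m : ℕ) :
    C ((-Complex.I) ^ (m + 1)) * (ovA (m + 1) - ovA m) = 2 * (X * ovL 0 m) := by
  have hV := ovV_mul m
  have hI := ovI_sq
  unfold ovL ovE
  simp only [zero_add, pow_one]
  change _ = 2 * (X * ((-(C Complex.I * X)) ^ m * ovA m * _))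
  have h1 : ovA (m + 1) = ovA m * ((1 + C Complex.I * X ^ (m + 1)) * ovV (m + 1)) := by
    unfold ovA; rw [Finset.prod_range_succ]
  have h2 : (-(C Complex.I * X : ℂ⟦X⟧)) ^ m = (-C Complex.I) ^ m * X ^ m := by
    rw [← mul_pow]; congr 1; ring
  rw [h1, h2, map_pow, map_neg, pow_succ, pow_succ]
  rw [pow_succ] at hV
  linear_combination ((-C Complex.I) ^ m * (-C Complex.I)) * (ovA m) * hV
    - 2 * (-C Complex.I) ^ m * ovA m * X ^ m * X * ovV (m + 1) * hI

open PowerSeries in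
theorem ov_coeff (n : ℕ) :
    ∑ m ∈ Finset.range (n + 1), (-Complex.I) ^ (m + 1) *
      (coeff n (ovA (m + 1)) - coeff n (ovA m)) =
    2 * ∑ D ∈ Finset.range (n + 1), (if n = (D + 1) ^ 2 then 1 else 0) := by
  have h := ov_iter (n + 1) (n + 1)
  rw [X_pow_dvd_iff] at h
  have h := h n (by omega)
  have h3 : coeff n ((X : ℂ⟦X⟧) ^ ((n + 1 + 1) ^ 2) * ∑ k ∈ Finset.range (n + 1), ovL (n + 1) k) = 0 := by
    refine X_pow_dvd_iff.mp (Dvd.intro _ rfl) n ?_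
    nlinarith
  rw [map_sub, map_sub, h3, sub_zero, sub_eq_zero, map_sum] at h
  simp only [coeff_X_pow] at h
  rw [← h, Finset.mul_sum, map_sum, Finset.mul_sum]
  refine Finset.sum_congr rfl fun m _ => ?_
  have := congrArg (coeff n) (ovA_diff m)
  rw [coeff_C_mul, map_sub] at this
  rw [this, show (2 : ℂ⟦X⟧) = C 2 from (map_ofNat C 2).symm, coeff_C_mul]

open PowerSeries in
open scoped PowerSeries.WithPiTopology in
theorem ov_factor (k : ℕ) :
    1 + ∑' j : ℕ, (2 * Complex.I ^ (j + 1)) • (X : ℂ⟦X⟧) ^ ((k + 1) * (j + 1)) =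
    (1 + C Complex.I * X ^ (k + 1)) * ovV (k + 1) := by
  have hs := Nat.Partition.summable_genFun_term (fun _ c => 2 * Complex.I ^ c) k
  have h := hs.tsum_eq_zero_add
  have h2 : ∑' j : ℕ, (2 * Complex.I ^ (j + 1 + 1)) • (X : ℂ⟦X⟧) ^ ((k + 1) * (j + 1 + 1)) =
      C Complex.I * X ^ (k + 1) *
      ∑' j : ℕ, (2 * Complex.I ^ (j + 1)) • (X : ℂ⟦X⟧) ^ ((k + 1) * (j + 1)) := by
    rw [← hs.tsum_mul_left]
    refine tsum_congr fun j => ?_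
    simp only [smul_eq_C_mul, map_mul, map_pow]
    ring
  rw [h2] at h
  have hV := ovV_mul k
  simp only [smul_eq_C_mul, zero_add, mul_one, pow_one, map_mul] at h
  have h22 : (C 2 : ℂ⟦X⟧) = 2 := map_ofNat C 2
  rw [h22] at h
  simp only [smul_eq_C_mul, map_mul, h22]
  generalize ∑' j : ℕ, (2 * C (Complex.I ^ (j + 1))) * (X : ℂ⟦X⟧) ^ ((k + 1) * (j + 1)) = T at *
  linear_combination ovV (k + 1) * h - (1 + T) * hV

open PowerSeries in
open scoped PowerSeries.WithPiTopology in
theorem ov_genFun (m : ℕ) :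
    Nat.Partition.genFun (fun i c => if i ≤ m then 2 * Complex.I ^ c else 0) = ovA m := by
  have h := Nat.Partition.hasProd_genFun
    (fun i c => if i ≤ m then 2 * Complex.I ^ c else (0 : ℂ))
  refine h.unique ?_
  unfold ovA
  have h1 : ∏ j ∈ Finset.range m, ((1 + C Complex.I * X ^ (j + 1)) * ovV (j + 1)) =
      ∏ k ∈ Finset.range m, (1 + ∑' j : ℕ, (if k + 1 ≤ m then 2 * Complex.I ^ (j + 1) else (0 : ℂ)) •
        (X : ℂ⟦X⟧) ^ ((k + 1) * (j + 1))) := by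
    refine Finset.prod_congr rfl fun k hk => ?_
    rw [Finset.mem_range] at hk
    rw [← ov_factor]
    simp [show k + 1 ≤ m from hk]
  rw [h1]
  apply hasProd_prod_of_ne_finset_one
  intro k hk
  rw [Finset.mem_range] at hk
  simp [show ¬ (k + 1 ≤ m) from hk]

open PowerSeries in
theorem ovA_coeff (m n : ℕ) : coeff n (ovA m) = ∑ p : n.Partition,
    if p.parts.sup ≤ m then 2 ^ p.parts.toFinset.card * Complex.I ^ p.parts.card else 0 := by
  rw [← ov_genFun, Nat.Partition.coeff_genFun]
  refine Finset.sum_congr rfl fun p _ => ?_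
  simp only [Finsupp.prod, Multiset.toFinsupp_support, Multiset.toFinsupp_apply]
  split_ifs with h
  · rw [Multiset.sup_le] at h
    rw [Finset.prod_congr rfl (g := fun i => 2 * Complex.I ^ p.parts.count i)]
    · rw [Finset.prod_mul_distrib, Finset.prod_const, Finset.prod_pow_eq_pow_sum,
        Multiset.toFinset_sum_count_eq]
    · intro i hi
      rw [if_pos (h i (Multiset.mem_toFinset.mp hi))]
  · rw [Multiset.sup_le] at h
    push Not at h
    obtain ⟨b, hb, hb2⟩ := h
    apply Finset.prod_eq_zero (Multiset.mem_toFinset.mpr hb)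
    rw [if_neg (by omega)]

theorem ov_main (n : ℕ) (hn : 1 ≤ n) :
    ∑ p : n.Partition, (2 : ℂ) ^ p.parts.toFinset.card *
      (Complex.I ^ p.parts.card * (-Complex.I) ^ p.parts.sup) =
    if IsSquare n then 2 else 0 := by
  have h := ov_coeff n
  have h1 : 2 * ∑ D ∈ Finset.range (n + 1), (if n = (D + 1) ^ 2 then (1 : ℂ) else 0) =
      if IsSquare n then 2 else 0 := by
    split_ifs with hsq
    · obtain ⟨r, rfl⟩ := hsq
      have hr : r ≠ 0 := by rintro rfl; simp at hn
      obtain ⟨s, rfl⟩ := Nat.exists_eq_add_one_of_ne_zero hr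
      rw [Finset.sum_eq_single s]
      · rw [if_pos (by ring), mul_one]
      · intro b _ hb
        rw [if_neg]
        intro h
        apply hb
        rw [← sq] at h
        have := Nat.pow_left_injective (n := 2) (by norm_num) h
        omega
      · intro h
        exfalso; apply h; rw [Finset.mem_range]; nlinarith
    · rw [Finset.sum_eq_zero, mul_zero]
      intro D _
      rw [if_neg]
      intro h
      exact hsq ⟨D + 1, by rw [h]; ring⟩
  rw [← h1, ← h]
  simp only [ovA_coeff, ← Finset.sum_sub_distrib, Finset.mul_sum]
  rw [Finset.sum_comm]
  refine Finset.sum_congr rfl fun p _ => ?_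
  have hle : p.parts.sup ≤ n := Multiset.sup_le.mpr fun b hb => Nat.Partition.le_of_mem_parts hb
  have hpos : p.parts.sup ≠ 0 := by
    intro h0
    have hz : p.parts = 0 := by
      apply Multiset.eq_zero_of_forall_notMem
      intro b hb
      have := Multiset.le_sup hb
      have := p.parts_pos hb
      omega
    have := p.parts_sum
    rw [hz] at this
    simp at this
    omega
  obtain ⟨s, hs⟩ := Nat.exists_eq_add_one_of_ne_zero hpos
  rw [Finset.sum_eq_single s]
  · rw [hs, if_pos le_rfl, if_neg (by omega)]; ring
  · intro b _ hb
    by_cases hc : p.parts.sup ≤ b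
    · rw [if_pos hc, if_pos (by omega)]; ring
    · rw [if_neg hc, if_neg (by omega)]; ring
  · intro hh
    exfalso; apply hh; rw [Finset.mem_range]; omega

/-- Overpartitions as a sigma type. -/
def ovEquiv (n : ℕ) :
    Overpartition n ≃ (p : n.Partition) × {s : Finset ℕ // s ∈ p.parts.toFinset.powerset} where
  toFun P := ⟨P.1.1, P.1.2, Finset.mem_powerset.mpr P.2⟩
  invFun Q := ⟨(Q.1, Q.2.1), Finset.mem_powerset.mp Q.2.2⟩
  left_inv _ := rfl
  right_inv _ := rfl

noncomputable instance ovFintype (n : ℕ) : Fintype (Overpartition n) :=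
  Fintype.ofEquiv _ (ovEquiv n).symm

theorem ov_re (c s : ℕ) : (Complex.I ^ c * (-Complex.I) ^ s).re =
    (if ((s : ℤ) - c ≡ 0 [ZMOD ((4 : ℕ) : ℤ)]) then (1 : ℝ) else 0) -
    (if ((s : ℤ) - c ≡ 2 [ZMOD ((4 : ℕ) : ℤ)]) then (1 : ℝ) else 0) := by
  have hI3 : Complex.I ^ 3 = -Complex.I := by rw [pow_succ, Complex.I_sq]; ring
  rw [← hI3, ← pow_mul, ← pow_add, Complex.I_pow_eq_pow_mod]
  have h4 : (c + 3 * s) % 4 < 4 := Nat.mod_lt _ (by norm_num)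
  generalize hr : (c + 3 * s) % 4 = r at *
  interval_cases r
  · rw [if_pos (by unfold Int.ModEq; omega), if_neg (by unfold Int.ModEq; omega)]; simp
  · rw [if_neg (by unfold Int.ModEq; omega), if_neg (by unfold Int.ModEq; omega)]; simp
  · rw [if_neg (by unfold Int.ModEq; omega), if_pos (by unfold Int.ModEq; omega)]; simp
  · rw [if_neg (by unfold Int.ModEq; omega), if_neg (by unfold Int.ModEq; omega)]; simp [hI3]

theorem ov_card (a : ℤ) (n : ℕ) : (nbar a 4 n : ℝ) =
    ∑ P : Overpartition n, if P.rank ≡ a [ZMOD ((4 : ℕ) : ℤ)] then (1 : ℝ) else 0 := by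
  classical
  unfold nbar
  rw [Nat.card_eq_fintype_card, Fintype.card_subtype, Finset.sum_boole]

theorem stmt12 (n : ℕ) (hn : 1 ≤ n) :
    (nbar 0 4 n : ℤ) - (nbar 2 4 n : ℤ) = if IsSquare n then 2 else 0 := by
  have h : ((nbar 0 4 n : ℝ) - (nbar 2 4 n : ℝ)) = if IsSquare n then 2 else 0 := by
    rw [ov_card, ov_card, ← Finset.sum_sub_distrib]
    have h1 : ∀ P : Overpartition n,
        ((if P.rank ≡ 0 [ZMOD ((4 : ℕ) : ℤ)] then (1 : ℝ) else 0) -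
        (if P.rank ≡ 2 [ZMOD ((4 : ℕ) : ℤ)] then (1 : ℝ) else 0)) =
        (fun Q : (p : n.Partition) × {s : Finset ℕ // s ∈ p.parts.toFinset.powerset} =>
          (Complex.I ^ Q.1.parts.card * (-Complex.I) ^ Q.1.parts.sup).re) (ovEquiv n P) :=
      fun P => (ov_re _ _).symm
    rw [Finset.sum_congr rfl (fun P _ => h1 P), Equiv.sum_comp (ovEquiv n)
      (fun Q : (p : n.Partition) × {s : Finset ℕ // s ∈ p.parts.toFinset.powerset} =>
          (Complex.I ^ Q.1.parts.card * (-Complex.I) ^ Q.1.parts.sup).re), Fintype.sum_sigma]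
    have h2 := congrArg Complex.re (ov_main n hn)
    rw [Complex.re_sum] at h2
    have h3 : (if IsSquare n then (2 : ℂ) else 0).re = if IsSquare n then 2 else 0 := by
      split_ifs <;> simp
    rw [h3] at h2
    rw [← h2]
    refine Finset.sum_congr rfl fun p _ => ?_
    dsimp only
    rw [Finset.sum_const, Finset.card_univ, Fintype.card_coe, Finset.card_powerset, nsmul_eq_mul]
    have h4 : ((2 : ℂ) ^ p.parts.toFinset.card) = ((2 ^ p.parts.toFinset.card : ℝ) : ℂ) := by
      push_cast; rfl
    rw [h4, Complex.re_ofReal_mul]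
    push_cast
    rfl
  have h5 : (((nbar 0 4 n : ℤ) - (nbar 2 4 n : ℤ) : ℤ) : ℝ) =
      ((if IsSquare n then 2 else 0 : ℤ) : ℝ) := by
    push_cast
    rw [h]
  exact_mod_cast h5
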